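/- Let ε > 0 and let π be a strategy profile of a finite discounted stochastic game with ‖f(π) − π‖∞ ≤ ε. Then for every agent i, state s, and action a^i, writing D_{a^i}(s) = max(0, V^{π^i,π^{-i}}_{π^i(s,a^i)=1}(s) − V^{π^i,π^{-i}}(s)), one has π^i(s,a^i)·∑_{b^i∈𝔸^i} D_{b^i}(s) ≤ D_{a^i}(s) + ε·(1 + A_max R_max/(1−γ)). -/

import Mathlib

/-!
Clearing the denominator in `|f(π) − π| ≤ ε` gives
`π(s,a) · ∑ D ≤ D_a + ε (1 + ∑ D)`, so everything reduces to the bound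
`∑_b D_b ≤ A_max · R_max / (1 − γ)`. Each `D_b` is at most a difference of two values of
strategy profiles, and values lie in `[0, R_max / (1 − γ)]`. The latter is a maximum principle
(`SG.le_of_bellman`) for the Bellman equation with a stochastic matrix; applied to the
homogeneous equation, the same principle shows that `1 − γ P^π` is invertible, so that `SG.V`,
defined through a matrix inverse, does solve the Bellman equation.
-/

open Finset

/-- A finite discounted stochastic game with `n` agents, `S` states and
action counts `A i` for each agent `i`. -/
structure SG (n S : ℕ) (A : Fin n → ℕ) where
  P : Fin S → (∀ i, Fin (A i)) → Fin S → ℝ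
  r : Fin n → Fin S → (∀ i, Fin (A i)) → ℝ
  Rmax : ℝ
  γ : ℝ
  P_nonneg : ∀ s a s', 0 ≤ P s a s'
  P_sum_one : ∀ s a, ∑ s', P s a s' = 1
  r_nonneg : ∀ i s a, 0 ≤ r i s a
  r_le_Rmax : ∀ i s a, r i s a ≤ Rmax
  γ_nonneg : 0 ≤ γ
  γ_lt_one : γ < 1

namespace SG

variable {n S : ℕ} {A : Fin n → ℕ}

/-- A (behavioral) strategy profile: agent `i` plays at state `s` the distribution
`π i s` on its actions. -/
abbrev Profile (n S : ℕ) (A : Fin n → ℕ) := ∀ i : Fin n, Fin S → Fin (A i) → ℝ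

/-- `π` is a genuine strategy profile: each `π i s` is a probability distribution. -/
def IsProfile (π : Profile n S A) : Prop :=
  (∀ i s a, 0 ≤ π i s a) ∧ ∀ i s, ∑ a, π i s a = 1

/-- `A_max`, the largest number of actions of any agent. -/
def Amax (A : Fin n → ℕ) : ℕ := Finset.univ.sup A

/-- Probability of the joint action `a` at state `s` under profile `π`. -/
def jointProb (π : Profile n S A) (s : Fin S) (a : ∀ i, Fin (A i)) : ℝ :=
  ∏ i, π i s (a i)

/-- The state-transition matrix `P^π` induced by the profile `π`. -/
noncomputable def Pmat (g : SG n S A) (π : Profile n S A) : Matrix (Fin S) (Fin S) ℝ :=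
  fun s s' => ∑ a, jointProb π s a * g.P s a s'

/-- Expected one-step reward `r^{i,π}(s)` of agent `i` at state `s` under `π`. -/
noncomputable def rvec (g : SG n S A) (π : Profile n S A) (i : Fin n) (s : Fin S) : ℝ :=
  ∑ a, jointProb π s a * g.r i s a

/-- The value function `V^{π^i,π^{-i}}` of agent `i` under profile `π`: the unique
solution of the Bellman equation `V = r^{i,π} + γ P^π V`, i.e. `(I − γP^π)⁻¹ r^{i,π}`. -/
noncomputable def V (g : SG n S A) (π : Profile n S A) (i : Fin n) : Fin S → ℝ :=
  Matrix.mulVec (1 - g.γ • g.Pmat π)⁻¹ (g.rvec π i)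

/-- The profile obtained from `π` by letting agent `i` play the pure action `a`
at state `s` (and `π i` at every other state). -/
def devProfile (π : Profile n S A) (i : Fin n) (s : Fin S) (a : Fin (A i)) : Profile n S A :=
  Function.update π i (fun t b => if t = s then (if b = a then (1 : ℝ) else 0) else π i t b)

/-- The one-step-deviation value `V^{π^i,π^{-i}}_{π^i(s,a)=1}(s)`. -/
noncomputable def Vdev (g : SG n S A) (π : Profile n S A) (i : Fin n) (s : Fin S)
    (a : Fin (A i)) : ℝ :=
  g.V (devProfile π i s a) i s

/-- `D^{π}_{a}(s) = max(0, V^{π^i,π^{-i}}_{π^i(s,a)=1}(s) − V^{π^i,π^{-i}}(s))`. -/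
noncomputable def D (g : SG n S A) (π : Profile n S A) (i : Fin n) (s : Fin S)
    (a : Fin (A i)) : ℝ :=
  max 0 (g.Vdev π i s a - g.V π i s)

/-- Nash's improvement map `f` on strategy profiles. -/
noncomputable def f (g : SG n S A) (π : Profile n S A) : Profile n S A :=
  fun i s a => (π i s a + g.D π i s a) / (1 + ∑ b, g.D π i s b)

/-- `π` is a Markov perfect equilibrium: no agent can improve its value at any state
by unilaterally switching to another behavioral strategy. -/
def IsMPE (g : SG n S A) (π : Profile n S A) : Prop :=
  ∀ (s : Fin S) (i : Fin n) (σ : Fin S → Fin (A i) → ℝ),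
    ((∀ t b, 0 ≤ σ t b) ∧ ∀ t, ∑ b, σ t b = 1) →
    g.V (Function.update π i σ) i s ≤ g.V π i s

/-- `π` is an `ε`-approximate Markov perfect equilibrium. -/
def IsApproxMPE (g : SG n S A) (π : Profile n S A) (ε : ℝ) : Prop :=
  ∀ (s : Fin S) (i : Fin n) (σ : Fin S → Fin (A i) → ℝ),
    ((∀ t b, 0 ≤ σ t b) ∧ ∀ t, ∑ b, σ t b = 1) →
    g.V (Function.update π i σ) i s - ε ≤ g.V π i s

end SG

namespace SG

variable {n S : ℕ} {A : Fin n → ℕ}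

lemma jointProb_nonneg {π : Profile n S A} (hπ : IsProfile π) (s : Fin S)
    (a : ∀ i, Fin (A i)) : 0 ≤ jointProb π s a :=
  Finset.prod_nonneg fun i _ => hπ.1 i s (a i)

lemma sum_jointProb {π : Profile n S A} (hπ : IsProfile π) (s : Fin S) :
    ∑ a, jointProb π s a = 1 := by
  unfold jointProb
  rw [← Fintype.prod_sum (fun i b => π i s b)]
  exact Finset.prod_eq_one fun i _ => hπ.2 i s

lemma Pmat_nonneg (g : SG n S A) {π : Profile n S A} (hπ : IsProfile π) (s t : Fin S) :
    0 ≤ g.Pmat π s t :=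
  Finset.sum_nonneg fun a _ => mul_nonneg (jointProb_nonneg hπ s a) (g.P_nonneg s a t)

lemma Pmat_sum (g : SG n S A) {π : Profile n S A} (hπ : IsProfile π) (s : Fin S) :
    ∑ t, g.Pmat π s t = 1 := by
  unfold Pmat
  rw [Finset.sum_comm]
  simp_rw [← Finset.mul_sum, g.P_sum_one, mul_one]
  exact sum_jointProb hπ s

lemma rvec_nonneg (g : SG n S A) {π : Profile n S A} (hπ : IsProfile π) (i : Fin n)
    (s : Fin S) : 0 ≤ g.rvec π i s :=
  Finset.sum_nonneg fun a _ => mul_nonneg (jointProb_nonneg hπ s a) (g.r_nonneg i s a)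

lemma rvec_le (g : SG n S A) {π : Profile n S A} (hπ : IsProfile π) (i : Fin n)
    (s : Fin S) : g.rvec π i s ≤ g.Rmax := by
  calc g.rvec π i s ≤ ∑ a, jointProb π s a * g.Rmax :=
        Finset.sum_le_sum fun a _ =>
          mul_le_mul_of_nonneg_left (g.r_le_Rmax i s a) (jointProb_nonneg hπ s a)
    _ = g.Rmax := by rw [← Finset.sum_mul, sum_jointProb hπ, one_mul]

lemma bellman_mulVec_apply (g : SG n S A) (π : Profile n S A) (x : Fin S → ℝ) (s : Fin S) :
    ((1 - g.γ • g.Pmat π).mulVec x) s = x s - g.γ * ∑ t, g.Pmat π s t * x t := by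
  rw [Matrix.sub_mulVec, Matrix.one_mulVec, Matrix.smul_mulVec]
  simp [Matrix.mulVec, dotProduct]

/-- Maximum principle for the Bellman operator: evaluate at a state where `x` is largest. -/
lemma le_of_bellman (g : SG n S A) {π : Profile n S A} (hπ : IsProfile π) (x : Fin S → ℝ)
    (c : ℝ) (h : ∀ s, ((1 - g.γ • g.Pmat π).mulVec x) s ≤ c) (s : Fin S) :
    x s ≤ c / (1 - g.γ) := by
  have hγ : 0 < 1 - g.γ := sub_pos.2 g.γ_lt_one
  obtain ⟨m, -, hm⟩ := Finset.exists_max_image Finset.univ x ⟨s, Finset.mem_univ s⟩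
  have hle : ∑ t, g.Pmat π m t * x t ≤ x m := by
    calc ∑ t, g.Pmat π m t * x t ≤ ∑ t, g.Pmat π m t * x m :=
          Finset.sum_le_sum fun t _ =>
            mul_le_mul_of_nonneg_left (hm t (Finset.mem_univ t)) (g.Pmat_nonneg hπ m t)
      _ = x m := by rw [← Finset.sum_mul, g.Pmat_sum hπ, one_mul]
  have h1 := h m
  rw [bellman_mulVec_apply] at h1
  have h2 := mul_le_mul_of_nonneg_left hle g.γ_nonneg
  refine (hm s (Finset.mem_univ s)).trans ?_
  rw [le_div_iff₀ hγ]
  linarith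

lemma bellman_det_ne_zero (g : SG n S A) {π : Profile n S A} (hπ : IsProfile π) :
    (1 - g.γ • g.Pmat π).det ≠ 0 := by
  intro h
  obtain ⟨v, hv, hv0⟩ := Matrix.exists_mulVec_eq_zero_iff.2 h
  apply hv
  funext s
  have h1 := g.le_of_bellman hπ v 0 (fun t => by simp [hv0]) s
  have h2 := g.le_of_bellman hπ (-v) 0 (fun t => by simp [Matrix.mulVec_neg, hv0]) s
  simp only [zero_div, Pi.neg_apply] at h1 h2
  exact le_antisymm h1 (neg_nonpos.1 h2)

/-- `V` solves the Bellman equation. -/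
lemma bellman_V (g : SG n S A) {π : Profile n S A} (hπ : IsProfile π) (i : Fin n) :
    (1 - g.γ • g.Pmat π).mulVec (g.V π i) = g.rvec π i := by
  unfold V
  rw [Matrix.mulVec_mulVec, Matrix.mul_nonsing_inv _ (g.bellman_det_ne_zero hπ).isUnit,
    Matrix.one_mulVec]

lemma V_le (g : SG n S A) {π : Profile n S A} (hπ : IsProfile π) (i : Fin n) (s : Fin S) :
    g.V π i s ≤ g.Rmax / (1 - g.γ) :=
  g.le_of_bellman hπ _ _ (fun t => by rw [g.bellman_V hπ]; exact g.rvec_le hπ i t) s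

lemma V_nonneg (g : SG n S A) {π : Profile n S A} (hπ : IsProfile π) (i : Fin n) (s : Fin S) :
    0 ≤ g.V π i s := by
  have h := g.le_of_bellman hπ (-g.V π i) 0
    (fun t => by
      rw [Matrix.mulVec_neg, g.bellman_V hπ]
      simpa using g.rvec_nonneg hπ i t) s
  simp only [zero_div, Pi.neg_apply] at h
  linarith

lemma isProfile_devProfile {π : Profile n S A} (hπ : IsProfile π) (i : Fin n) (s : Fin S)
    (a : Fin (A i)) : IsProfile (devProfile π i s a) := by
  constructor
  · intro j t b
    by_cases hj : j = i
    · subst hj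
      simp only [devProfile, Function.update_self]
      split_ifs
      exacts [zero_le_one, le_rfl, hπ.1 _ _ _]
    · simpa [devProfile, hj] using hπ.1 j t b
  · intro j t
    by_cases hj : j = i
    · subst hj
      simp only [devProfile, Function.update_self]
      by_cases ht : t = s
      · simp [ht]
      · simpa [ht] using hπ.2 j t
    · simpa [devProfile, hj] using hπ.2 j t

lemma D_nonneg (g : SG n S A) (π : Profile n S A) (i : Fin n) (s : Fin S) (a : Fin (A i)) :
    0 ≤ g.D π i s a :=
  le_max_left _ _

lemma D_le (g : SG n S A) {π : Profile n S A} (hπ : IsProfile π) (i : Fin n) (s : Fin S)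
    (a : Fin (A i)) : g.D π i s a ≤ g.Rmax / (1 - g.γ) := by
  have h1 : g.Vdev π i s a ≤ _ := g.V_le (isProfile_devProfile hπ i s a) i s
  have h2 := g.V_nonneg hπ i s
  have h3 := g.V_le hπ i s
  exact max_le (h2.trans h3) (by linarith)

lemma sum_D_le (g : SG n S A) {π : Profile n S A} (hπ : IsProfile π) (i : Fin n) (s : Fin S) :
    ∑ b, g.D π i s b ≤ (Amax A : ℝ) * g.Rmax / (1 - g.γ) := by
  have hA : (A i : ℝ) ≤ (Amax A : ℝ) := by
    exact_mod_cast Finset.le_sup (f := A) (Finset.mem_univ i)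
  calc ∑ b, g.D π i s b ≤ ∑ _b : Fin (A i), g.Rmax / (1 - g.γ) :=
        Finset.sum_le_sum fun b _ => g.D_le hπ i s b
    _ = (A i : ℝ) * (g.Rmax / (1 - g.γ)) := by simp
    _ ≤ (Amax A : ℝ) * (g.Rmax / (1 - g.γ)) :=
        mul_le_mul_of_nonneg_right hA ((g.V_nonneg hπ i s).trans (g.V_le hπ i s))
    _ = (Amax A : ℝ) * g.Rmax / (1 - g.γ) := by rw [mul_div_assoc]

end SG

open SG in
/-- the crucial inequality for approximate fixed points of `f`. -/
theorem crucial_inequality {n S : ℕ} {A : Fin n → ℕ} (g : SG n S A)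
    (π : Profile n S A) (hπ : IsProfile π)
    (ε : ℝ) (hε : 0 < ε) (hfix : ∀ i s a, |g.f π i s a - π i s a| ≤ ε) :
    ∀ (i : Fin n) (s : Fin S) (a : Fin (A i)),
      π i s a * ∑ b, g.D π i s b ≤
        g.D π i s a + ε * (1 + (Amax A : ℝ) * g.Rmax / (1 - g.γ)) := by
  intro i s a
  have hsum : 0 ≤ ∑ b, g.D π i s b := Finset.sum_nonneg fun b _ => g.D_nonneg π i s b
  have hpos : 0 < 1 + ∑ b, g.D π i s b := by linarith
  have h1 : π i s a - ε ≤ g.f π i s a := by linarith [(abs_le.1 (hfix i s a)).1]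
  rw [SG.f, le_div_iff₀ hpos] at h1
  have h2 := mul_le_mul_of_nonneg_left (g.sum_D_le hπ i s) hε.le
  linarith
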